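/- Let α > -1 and β < 0 with α + β > -1. Then there exists no finite positive Borel measure μ on [0,∞) such that j_{α+β}(z) = ∫₀^∞ j_α(zx) dμ(x) for all z ∈ ℝ. -/

import Mathlib

open MeasureTheory Complex

/-- The normalized one-variable Bessel function `j_α(z) = ₀F₁(α+1; -z²/4)`. -/
noncomputable def jBessel (α z : ℂ) : ℂ :=
  ∑' k : ℕ, (-1) ^ k * Complex.Gamma (α + 1) /
      ((k.factorial : ℂ) * Complex.Gamma (α + k + 1)) * (z / 2) ^ (2 * k)

/-!
Suppose `j_{α+β}(z) = ∫ j_α(zx) dμ(x)` and put `a = α + 1`, `b = α + β + 1`. In the variable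
`y = z² / 4` this reads `₀F₁(b; -y) = ∫ ₀F₁(a; -y x²) dμ(x)`. Integrating against the Gamma
density `e^{-t} t^{a-1}` with `y = ut` turns `₀F₁(a; ·)` into `₁F₁(a; a; ·) = exp`, so that
`₁F₁(a; b; t)` is, for `t ≤ 0`, the moment generating function of `x²` under `μ`. Such a function
is log-convex, and its value and first two derivatives at `0` therefore satisfy
`(a / b)² ≤ a (a + 1) / (b (b + 1))`, that is, `a ≤ b`.

Fubini needs a dominating function. For `a ≥ 1/2` the Bessel function is bounded by `1`. For
`a < 1/2` it grows like a power, and `μ` is only known to integrate `₀F₁(a; -y x²)` for each small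
`y` separately. By Baire's theorem `∫ |₀F₁(a; -y x²)| dμ(x)` is bounded for `y` in some interval,
so the average of `|₀F₁(a; -y x²)|` over that interval is `μ`-integrable. An energy estimate for
the Bessel equation shows that this average already dominates the envelope of `₀F₁(a; -y x²)`.
-/

section Development

open Set Filter Topology ProbabilityTheory
open scoped ENNReal

section ExpGenFun

open scoped Nat

/-- Geometric growth of a real sequence; it makes the exponential generating function entire. -/
def IsGeometricallyBounded (w : ℕ → ℝ) : Prop :=
  ∃ C R : ℝ, ∀ k, |w k| ≤ C * R ^ k

/-- The exponential generating function `∑ w k * x ^ k / k!` of a real sequence. -/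
noncomputable def expGenFun (w : ℕ → ℝ) (x : ℝ) : ℝ :=
  ∑' k : ℕ, w k * (x ^ k / k !)

theorem expGenFun_zero (w : ℕ → ℝ) : expGenFun w 0 = w 0 := by
  rw [expGenFun, tsum_eq_single 0 fun k hk => by simp [hk]]
  simp

namespace IsGeometricallyBounded

variable {w : ℕ → ℝ}

theorem shift (hw : IsGeometricallyBounded w) :
    IsGeometricallyBounded fun k => w (k + 1) := by
  obtain ⟨C, R, h⟩ := hw
  exact ⟨C * R, R, fun k => (h (k + 1)).trans_eq (by ring)⟩

theorem summable_abs (hw : IsGeometricallyBounded w) (x : ℝ) :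
    Summable fun k => |w k| * (|x| ^ k / k !) := by
  obtain ⟨C, R, h⟩ := hw
  refine .of_nonneg_of_le (fun k => by positivity) (fun k => ?_)
    ((Real.summable_pow_div_factorial (R * |x|)).mul_left C)
  calc |w k| * (|x| ^ k / k !) ≤ C * R ^ k * (|x| ^ k / k !) := by gcongr; exact h k
    _ = C * ((R * |x|) ^ k / k !) := by rw [mul_pow]; ring

theorem summable (hw : IsGeometricallyBounded w) (x : ℝ) :
    Summable fun k => w k * (x ^ k / k !) :=
  .of_norm <| by simpa [abs_mul, abs_div] using hw.summable_abs x

theorem hasSum (hw : IsGeometricallyBounded w) (x : ℝ) :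
    HasSum (fun k => w k * (x ^ k / k !)) (expGenFun w x) :=
  (hw.summable x).hasSum

theorem summable_tail (hw : IsGeometricallyBounded w) (x : ℝ) :
    Summable fun k => w (k + 1) * (x ^ (k + 1) / (k + 1)!) :=
  (summable_nat_add_iff 1).2 (hw.summable x)

theorem expGenFun_eq_add (hw : IsGeometricallyBounded w) (x : ℝ) :
    expGenFun w x = w 0 + ∑' k : ℕ, w (k + 1) * (x ^ (k + 1) / (k + 1)!) := by
  rw [expGenFun, (hw.summable x).tsum_eq_zero_add]
  simp

theorem hasDerivAt_expGenFun (hw : IsGeometricallyBounded w) (x : ℝ) :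
    HasDerivAt (expGenFun w) (expGenFun (fun k => w (k + 1)) x) x := by
  have hterm (k : ℕ) (y : ℝ) : HasDerivAt (fun z : ℝ => w (k + 1) * (z ^ (k + 1) / (k + 1)!))
      (w (k + 1) * (y ^ k / k !)) y := by
    refine (((hasDerivAt_pow (k + 1) y).div_const _).const_mul _).congr_deriv ?_
    rw [Nat.factorial_succ]
    push_cast
    field_simp
  have hbound (k : ℕ) (y : ℝ) (hy : y ∈ Ioo (-(|x| + 1)) (|x| + 1)) :
      ‖w (k + 1) * (y ^ k / k !)‖ ≤ |w (k + 1)| * (|(|x| + 1)| ^ k / k !) := by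
    have hy' : |y| ≤ |(|x| + 1)| := (abs_lt.2 hy).le.trans (le_abs_self _)
    simp only [norm_mul, norm_div, norm_pow, Real.norm_eq_abs, Nat.abs_cast]
    gcongr
  have hx := abs_lt.1 (lt_add_one |x|)
  rw [funext hw.expGenFun_eq_add]
  exact (hasDerivAt_tsum_of_isPreconnected (hw.shift.summable_abs _) isOpen_Ioo
    isPreconnected_Ioo (fun k y _ => hterm k y) hbound hx (hw.summable_tail x) hx).const_add _

theorem continuous_expGenFun (hw : IsGeometricallyBounded w) : Continuous (expGenFun w) :=
  continuous_iff_continuousAt.2 fun x => (hw.hasDerivAt_expGenFun x).continuousAt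

theorem mul_expGenFun_shift (hw : IsGeometricallyBounded w) (x : ℝ) :
    x * expGenFun (fun k => w (k + 1)) x = expGenFun (fun k => k * w k) x := by
  have hterm (k : ℕ) : x * (w (k + 1) * (x ^ k / k !)) =
      (k + 1 : ℕ) * w (k + 1) * (x ^ (k + 1) / (k + 1)!) := by
    rw [Nat.factorial_succ]
    push_cast
    field_simp
    ring
  have hsum : HasSum (fun k : ℕ => (k + 1 : ℕ) * w (k + 1) * (x ^ (k + 1) / (k + 1)!))
      (x * expGenFun (fun k => w (k + 1)) x) := by
    simpa only [← hterm] using (hw.shift.hasSum x).mul_left x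
  have hsum' : HasSum (fun k : ℕ => k * w k * (x ^ k / k !))
      (x * expGenFun (fun k => w (k + 1)) x) := by
    simpa using HasSum.zero_add (f := fun k : ℕ => k * w k * (x ^ k / k !)) hsum
  exact hsum'.tsum_eq.symm

end IsGeometricallyBounded

theorem pow_le_ascPochhammer_eval {c : ℝ} (hc : 0 < c) (k : ℕ) :
    c ^ k ≤ (ascPochhammer ℝ k).eval c := by
  induction k with
  | zero => simp
  | succ k ih =>
    rw [pow_succ, ascPochhammer_succ_eval]
    exact mul_le_mul ih (by simp) hc.le (ascPochhammer_pos k c hc).le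

theorem ascPochhammer_eval_le_pow_mul {p c : ℝ} (hp : 0 < p) (hc : 0 < c) (k : ℕ) :
    (ascPochhammer ℝ k).eval p ≤ (1 + p / c) ^ k * (ascPochhammer ℝ k).eval c := by
  induction k with
  | zero => simp
  | succ k ih =>
    have hfactor : p + k ≤ (1 + p / c) * (c + k) := by
      have : (1 + p / c) * (c + k) = p + k + (c + p / c * k) := by field_simp; ring
      rw [this]
      exact le_add_of_nonneg_right (by positivity)
    have hpos := ascPochhammer_pos k c hc
    calc (ascPochhammer ℝ (k + 1)).eval p = (ascPochhammer ℝ k).eval p * (p + k) :=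
          ascPochhammer_succ_eval k p
      _ ≤ (1 + p / c) ^ k * (ascPochhammer ℝ k).eval c * ((1 + p / c) * (c + k)) := by gcongr
      _ = (1 + p / c) ^ (k + 1) * (ascPochhammer ℝ (k + 1)).eval c := by
          rw [ascPochhammer_succ_eval]; ring

theorem gamma_add_natCast_eq_mul_ascPochhammer {p : ℝ} (hp : 0 < p) (k : ℕ) :
    Real.Gamma (p + k) = Real.Gamma p * (ascPochhammer ℝ k).eval p := by
  induction k with
  | zero => simp
  | succ k ih =>
    rw [Nat.cast_succ, ← add_assoc, Real.Gamma_add_one (by positivity), ih,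
      ascPochhammer_succ_eval]
    ring

theorem IsGeometricallyBounded.integral_gamma_mul_expGenFun {w : ℕ → ℝ} {p : ℝ} (hp : 0 < p)
    (hw : IsGeometricallyBounded fun k => (ascPochhammer ℝ k).eval p * w k) (u : ℝ) :
    ∫ t in Ioi 0, Real.exp (-t) * t ^ (p - 1) * expGenFun w (u * t) =
      Real.Gamma p * expGenFun (fun k => (ascPochhammer ℝ k).eval p * w k) u := by
  set F : ℕ → ℝ → ℝ := fun k t => w k * (u ^ k / k !) * (Real.exp (-t) * t ^ (p + k - 1))
  have hF (k : ℕ) : IntegrableOn (F k) (Ioi 0) :=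
    (Real.GammaIntegral_convergent (by positivity)).const_mul _
  have hF_integral (k : ℕ) : ∫ t in Ioi 0, F k t =
      Real.Gamma p * ((ascPochhammer ℝ k).eval p * w k * (u ^ k / k !)) := by
    rw [integral_const_mul, ← Real.Gamma_eq_integral (by positivity),
      gamma_add_natCast_eq_mul_ascPochhammer hp]
    ring
  have hF_norm (k : ℕ) : ∫ t in Ioi 0, ‖F k t‖ =
      Real.Gamma p * (|(ascPochhammer ℝ k).eval p * w k| * (|u| ^ k / k !)) := by
    have : ∀ t ∈ Ioi (0 : ℝ), ‖F k t‖ =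
        |w k * (u ^ k / k !)| * (Real.exp (-t) * t ^ (p + k - 1)) := fun t (ht : 0 < t) => by
      rw [Real.norm_eq_abs, abs_mul, abs_of_pos (a := Real.exp _ * _) (by positivity)]
    rw [setIntegral_congr_fun measurableSet_Ioi this, integral_const_mul,
      ← Real.Gamma_eq_integral (by positivity), gamma_add_natCast_eq_mul_ascPochhammer hp]
    simp only [abs_mul, abs_div, abs_pow, Nat.abs_cast, abs_of_pos (ascPochhammer_pos k p hp)]
    ring
  have hF_tsum : ∀ t ∈ Ioi (0 : ℝ), Real.exp (-t) * t ^ (p - 1) * expGenFun w (u * t) =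
      ∑' k, F k t := fun t (ht : 0 < t) => by
    rw [expGenFun, ← tsum_mul_left]
    refine tsum_congr fun k => ?_
    simp only [F]
    rw [add_sub_right_comm, Real.rpow_add ht, Real.rpow_natCast, mul_pow]
    ring
  rw [setIntegral_congr_fun measurableSet_Ioi hF_tsum, expGenFun, ← tsum_mul_left,
    ← tsum_congr hF_integral]
  refine (hasSum_integral_of_summable_integral_norm hF ?_).tsum_eq.symm
  simpa only [hF_norm] using (hw.summable_abs u).mul_left _

theorem expGenFun_const_mul (r : ℝ) (w : ℕ → ℝ) (x : ℝ) :
    expGenFun (fun k => r * w k) x = r * expGenFun w x := by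
  simp only [expGenFun, mul_assoc, tsum_mul_left]

theorem IsGeometricallyBounded.expGenFun_sub {v w : ℕ → ℝ} (hv : IsGeometricallyBounded v)
    (hw : IsGeometricallyBounded w) (x : ℝ) :
    expGenFun (fun k => v k - w k) x = expGenFun v x - expGenFun w x := by
  simp only [expGenFun, sub_mul, (hv.summable x).tsum_sub (hw.summable x)]

end ExpGenFun

section HypergeometricFunctions

theorem ascPochhammer_eval_add_one (c : ℝ) (k : ℕ) :
    c * (ascPochhammer ℝ k).eval (c + 1) = (ascPochhammer ℝ (k + 1)).eval c := by
  simp [ascPochhammer_succ_left, Polynomial.eval_comp]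

/-- The Bessel–Clifford function `₀F₁(c; -y)`, which is the Bessel function `j_{c-1}(2√y)` as an
entire function of `y`. -/
noncomputable def besselClifford (c y : ℝ) : ℝ :=
  expGenFun (fun k => (-1) ^ k / (ascPochhammer ℝ k).eval c) y

/-- Kummer's confluent hypergeometric function `₁F₁(p; c; x)`. -/
noncomputable def kummer (p c x : ℝ) : ℝ :=
  expGenFun (fun k => (ascPochhammer ℝ k).eval p / (ascPochhammer ℝ k).eval c) x

variable {p c : ℝ}

theorem besselClifford_zero (c : ℝ) : besselClifford c 0 = 1 := by
  simp [besselClifford, expGenFun_zero]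

theorem isGeometricallyBounded_besselClifford (hc : 0 < c) :
    IsGeometricallyBounded fun k => (-1) ^ k / (ascPochhammer ℝ k).eval c := by
  refine ⟨1, c⁻¹, fun k => ?_⟩
  rw [abs_div, abs_neg_one_pow, abs_of_pos (ascPochhammer_pos k c hc), one_mul, inv_pow, one_div]
  exact inv_anti₀ (by positivity) (pow_le_ascPochhammer_eval hc k)

theorem isGeometricallyBounded_kummer (hp : 0 < p) (hc : 0 < c) :
    IsGeometricallyBounded fun k =>
      (ascPochhammer ℝ k).eval p / (ascPochhammer ℝ k).eval c := by
  refine ⟨1, 1 + p / c, fun k => ?_⟩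
  have hp' := ascPochhammer_pos k p hp
  have hc' := ascPochhammer_pos k c hc
  rw [abs_of_pos (by positivity), one_mul, div_le_iff₀ hc']
  exact ascPochhammer_eval_le_pow_mul hp hc k

theorem hasDerivAt_besselClifford (hc : 0 < c) (y : ℝ) :
    HasDerivAt (besselClifford c) (-(besselClifford (c + 1) y / c)) y := by
  refine ((isGeometricallyBounded_besselClifford hc).hasDerivAt_expGenFun y).congr_deriv ?_
  rw [besselClifford, div_eq_inv_mul, ← neg_mul, ← expGenFun_const_mul]
  congr 1 with k
  rw [← ascPochhammer_eval_add_one]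
  field_simp
  ring

theorem hasDerivAt_kummer (hp : 0 < p) (hc : 0 < c) (x : ℝ) :
    HasDerivAt (kummer p c) (p / c * kummer (p + 1) (c + 1) x) x := by
  refine ((isGeometricallyBounded_kummer hp hc).hasDerivAt_expGenFun x).congr_deriv ?_
  rw [kummer, ← expGenFun_const_mul]
  congr 1 with k
  rw [← ascPochhammer_eval_add_one, ← ascPochhammer_eval_add_one, mul_div_mul_comm]

theorem deriv_kummer (hp : 0 < p) (hc : 0 < c) :
    deriv (kummer p c) = fun x => p / c * kummer (p + 1) (c + 1) x :=
  funext fun x => (hasDerivAt_kummer hp hc x).deriv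

theorem iteratedDeriv_two_kummer (hp : 0 < p) (hc : 0 < c) :
    iteratedDeriv 2 (kummer p c) =
      fun x => p / c * ((p + 1) / (c + 1) * kummer (p + 1 + 1) (c + 1 + 1) x) := by
  rw [iteratedDeriv_succ, iteratedDeriv_one, deriv_kummer hp hc]
  exact funext fun x =>
    ((hasDerivAt_kummer (by positivity) (by positivity) x).const_mul _).deriv

theorem continuous_besselClifford (hc : 0 < c) : Continuous (besselClifford c) :=
  (isGeometricallyBounded_besselClifford hc).continuous_expGenFun

theorem continuous_kummer (hp : 0 < p) (hc : 0 < c) : Continuous (kummer p c) :=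
  (isGeometricallyBounded_kummer hp hc).continuous_expGenFun

theorem kummer_zero (p c : ℝ) : kummer p c 0 = 1 := by
  simp [kummer, expGenFun_zero]

theorem kummer_self (hc : 0 < c) (x : ℝ) : kummer c c x = Real.exp x := by
  rw [Real.exp_eq_exp_ℝ, NormedSpace.exp_eq_tsum_div]
  refine tsum_congr fun k => ?_
  simp only [div_self (ascPochhammer_pos k c hc).ne', one_mul]

-- With `φ = besselClifford c`, `hasDerivAt_besselClifford` turns this contiguous relation into the
-- Bessel equation `y φ'' + c φ' + φ = 0`.
theorem besselClifford_add_one_sub (hc : 0 < c) (y : ℝ) :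
    besselClifford (c + 1) y - besselClifford c y =
      y / (c * (c + 1)) * besselClifford (c + 2) y := by
  have hc₁ : 0 < c + 1 := by positivity
  have hshift (k : ℕ) : (-1) ^ (k + 1) / (ascPochhammer ℝ (k + 1)).eval (c + 1) =
      -(c + 1)⁻¹ * ((-1) ^ k / (ascPochhammer ℝ k).eval (c + 2)) := by
    rw [← ascPochhammer_eval_add_one, add_assoc, one_add_one_eq_two]
    field_simp
    ring
  have hsub (k : ℕ) : (k : ℝ) * ((-1) ^ k / (ascPochhammer ℝ k).eval (c + 1)) =
      c * ((-1) ^ k / (ascPochhammer ℝ k).eval c -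
        (-1) ^ k / (ascPochhammer ℝ k).eval (c + 1)) := by
    have h₀ := ascPochhammer_pos k c hc
    have h₁ := ascPochhammer_pos k (c + 1) hc₁
    have h₂ := ascPochhammer_eval_add_one c k
    rw [ascPochhammer_succ_eval] at h₂
    field_simp
    linear_combination - h₂
  have h := (isGeometricallyBounded_besselClifford hc₁).mul_expGenFun_shift y
  simp only [hshift, hsub, expGenFun_const_mul,
    (isGeometricallyBounded_besselClifford hc).expGenFun_sub
      (isGeometricallyBounded_besselClifford hc₁)] at h
  simp only [besselClifford]
  field_simp at h ⊢
  linear_combination h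

theorem integral_gamma_mul_besselClifford (hp : 0 < p) (hc : 0 < c) (u : ℝ) :
    ∫ t in Ioi 0, Real.exp (-t) * t ^ (p - 1) * besselClifford c (u * t) =
      Real.Gamma p * kummer p c (-u) := by
  have hcoeff (k : ℕ) : (ascPochhammer ℝ k).eval p * ((-1) ^ k / (ascPochhammer ℝ k).eval c) =
      (-1) ^ k * ((ascPochhammer ℝ k).eval p / (ascPochhammer ℝ k).eval c) := by ring
  have hbounded : IsGeometricallyBounded fun k =>
      (ascPochhammer ℝ k).eval p * ((-1) ^ k / (ascPochhammer ℝ k).eval c) := by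
    obtain ⟨C, R, h⟩ := isGeometricallyBounded_kummer hp hc
    exact ⟨C, R, fun k => by simpa [hcoeff, abs_mul] using h k⟩
  rw [kummer]
  refine (hbounded.integral_gamma_mul_expGenFun hp u).trans ?_
  congr 1
  refine tsum_congr fun k => ?_
  rw [neg_pow]
  ring

theorem jBessel_ofReal {α : ℝ} (hα : -1 < α) (z : ℝ) :
    jBessel α z = (besselClifford (α + 1) (z ^ 2 / 4) : ℝ) := by
  have hα' : 0 < α + 1 := by linarith
  rw [besselClifford, expGenFun, jBessel, Complex.ofReal_tsum]
  refine tsum_congr fun k => ?_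
  have hΓ : Complex.Gamma (α + k + 1) =
      Complex.Gamma (α + 1) * ((ascPochhammer ℝ k).eval (α + 1) : ℝ) := by
    rw [← Complex.ofReal_one, ← Complex.ofReal_add, Complex.Gamma_ofReal, ← Complex.ofReal_mul,
      ← gamma_add_natCast_eq_mul_ascPochhammer hα', ← Complex.Gamma_ofReal]
    push_cast
    ring_nf
  have hΓ₀ : Complex.Gamma (α + 1) ≠ 0 := by
    exact_mod_cast Complex.Gamma_ne_zero_of_re_pos (s := ((α + 1 : ℝ) : ℂ)) hα'
  rw [hΓ]
  push_cast
  rw [pow_mul, div_pow (z : ℂ), show (2 : ℂ) ^ 2 = 4 by norm_num]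
  field_simp

end HypergeometricFunctions

section Energy

/-- The energy `φ² + y φ'²` of the solution `φ = besselClifford c` of the Bessel equation, where
`φ' = -besselClifford (c + 1) / c`. -/
noncomputable def besselEnergy (c y : ℝ) : ℝ :=
  besselClifford c y ^ 2 + y * (besselClifford (c + 1) y / c) ^ 2

/-- The virial `-y φ φ' + (1 - c) / 2 * φ²` of `φ = besselClifford c`. Its derivative `φ² - y φ'²`
is the difference of the two parts of the energy. -/
noncomputable def besselVirial (c y : ℝ) : ℝ :=
  y * besselClifford c y * (besselClifford (c + 1) y / c) + (1 - c) / 2 * besselClifford c y ^ 2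

variable {c : ℝ}

theorem besselEnergy_zero (c : ℝ) : besselEnergy c 0 = 1 := by
  simp [besselEnergy, besselClifford_zero]

theorem sq_besselClifford_le_besselEnergy {y : ℝ} (hy : 0 ≤ y) :
    besselClifford c y ^ 2 ≤ besselEnergy c y :=
  le_add_of_nonneg_right (by positivity)

theorem besselEnergy_nonneg {y : ℝ} (hy : 0 ≤ y) : 0 ≤ besselEnergy c y :=
  (sq_nonneg _).trans (sq_besselClifford_le_besselEnergy hy)

theorem hasDerivAt_besselEnergy (hc : 0 < c) (y : ℝ) :
    HasDerivAt (besselEnergy c) ((1 - 2 * c) * (besselClifford (c + 1) y / c) ^ 2) y := by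
  have h₀ := hasDerivAt_besselClifford hc y
  have h₁ := hasDerivAt_besselClifford (c := c + 1) (by positivity) y
  have hODE := besselClifford_add_one_sub hc y
  rw [add_assoc, one_add_one_eq_two] at h₁
  refine ((h₀.fun_pow 2).add ((hasDerivAt_id y).mul ((h₁.div_const c).fun_pow 2))).congr_deriv ?_
  simp only [id, Nat.add_one_sub_one, pow_one, Nat.cast_ofNat]
  field_simp at hODE ⊢
  linear_combination (2 * besselClifford (c + 1) y) * hODE

theorem hasDerivAt_besselVirial (hc : 0 < c) (y : ℝ) :
    HasDerivAt (besselVirial c) (2 * besselClifford c y ^ 2 - besselEnergy c y) y := by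
  have h₀ := hasDerivAt_besselClifford hc y
  have h₁ := hasDerivAt_besselClifford (c := c + 1) (by positivity) y
  have hODE := besselClifford_add_one_sub hc y
  rw [add_assoc, one_add_one_eq_two] at h₁
  refine ((((hasDerivAt_id y).fun_mul h₀).fun_mul (h₁.div_const c)).add
    ((h₀.fun_pow 2).const_mul ((1 - c) / 2))).congr_deriv ?_
  simp only [id, besselEnergy, Nat.add_one_sub_one, pow_one, Nat.cast_ofNat]
  field_simp at hODE ⊢
  linear_combination (c * besselClifford c y) * hODE

theorem continuous_besselEnergy (hc : 0 < c) : Continuous (besselEnergy c) :=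
  continuous_iff_continuousAt.2 fun y => (hasDerivAt_besselEnergy hc y).continuousAt

theorem antitone_besselEnergy (hc : 1 / 2 ≤ c) : Antitone (besselEnergy c) :=
  antitone_of_hasDerivAt_nonpos (fun y => hasDerivAt_besselEnergy (by linarith) y)
    fun y => mul_nonpos_of_nonpos_of_nonneg (by linarith) (sq_nonneg _)

theorem monotone_besselEnergy (hc : 0 < c) (hc' : c ≤ 1 / 2) : Monotone (besselEnergy c) :=
  monotone_of_hasDerivAt_nonneg (hasDerivAt_besselEnergy hc)
    fun y => mul_nonneg (by linarith) (sq_nonneg _)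

theorem abs_besselClifford_le_one (hc : 1 / 2 ≤ c) {y : ℝ} (hy : 0 ≤ y) :
    |besselClifford c y| ≤ 1 := by
  rw [← sq_le_one_iff_abs_le_one, ← besselEnergy_zero c]
  exact (sq_besselClifford_le_besselEnergy hy).trans (antitone_besselEnergy hc hy)

theorem antitoneOn_besselEnergy_div (hc : 0 < c) :
    AntitoneOn (fun y => besselEnergy c y / y) (Ioi 0) := by
  have hderiv (y : ℝ) (hy : y ∈ Ioi 0) :=
    (hasDerivAt_besselEnergy hc y).div (hasDerivAt_id y) (ne_of_gt hy)
  refine antitoneOn_of_hasDerivWithinAt_nonpos (convex_Ioi 0)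
    (fun y hy => (hderiv y hy).continuousAt.continuousWithinAt)
    (fun y hy => (hderiv y (interior_subset hy)).hasDerivWithinAt) fun y hy => ?_
  rw [interior_Ioi, mem_Ioi] at hy
  refine div_nonpos_of_nonpos_of_nonneg ?_ (sq_nonneg _)
  have : 0 ≤ 2 * c * y * (besselClifford (c + 1) y / c) ^ 2 + besselClifford c y ^ 2 := by
    positivity
  simp only [id, besselEnergy]
  linarith

theorem besselEnergy_mul_le (hc : 0 < c) (hc' : c ≤ 1 / 2) {r y : ℝ} (hr : 0 ≤ r) (hy : 0 ≤ y) :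
    besselEnergy c (r * y) ≤ (1 + r) * besselEnergy c y := by
  have he := besselEnergy_nonneg (c := c) hy
  obtain hr₁ | hr₁ := le_total r 1
  · calc besselEnergy c (r * y) ≤ besselEnergy c y :=
          monotone_besselEnergy hc hc' (mul_le_of_le_one_left hy hr₁)
      _ ≤ (1 + r) * besselEnergy c y := le_mul_of_one_le_left he (by linarith)
  · obtain rfl | hy := hy.eq_or_lt
    · simpa [besselEnergy_zero] using hr
    · have hry : y ≤ r * y := le_mul_of_one_le_left hy.le hr₁
      have hanti := antitoneOn_besselEnergy_div hc hy (hy.trans_le hry) hry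
      calc besselEnergy c (r * y) ≤ r * besselEnergy c y := by
            have hr₀ : 0 < r := by linarith
            simp only at hanti
            field_simp at hanti
            linarith
        _ ≤ (1 + r) * besselEnergy c y := by gcongr; linarith

theorem abs_besselVirial_le (hc : 0 < c) (hc' : c ≤ 1 / 2) {y : ℝ} (hy : 0 ≤ y) :
    |besselVirial c y| ≤ (√y + 1) / 2 * besselEnergy c y := by
  set φ := besselClifford c y
  set ψ := besselClifford (c + 1) y / c
  have hE : besselEnergy c y = φ ^ 2 + (√y * ψ) ^ 2 := by
    rw [mul_pow, Real.sq_sqrt hy]; rfl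
  have hcross : |φ * (√y * ψ)| ≤ besselEnergy c y / 2 := by
    rw [hE, abs_le]
    constructor <;> nlinarith [sq_nonneg (φ + √y * ψ), sq_nonneg (φ - √y * ψ)]
  have hsq : φ ^ 2 ≤ besselEnergy c y := sq_besselClifford_le_besselEnergy hy
  calc |besselVirial c y|
      = |√y * (φ * (√y * ψ)) + (1 - c) / 2 * φ ^ 2| := by
        congr 1
        simp only [besselVirial, φ, ψ]
        linear_combination (-φ * ψ) * Real.mul_self_sqrt hy
    _ ≤ √y * |φ * (√y * ψ)| + (1 - c) / 2 * φ ^ 2 := by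
        refine (abs_add_le _ _).trans_eq ?_
        rw [abs_mul, abs_of_nonneg (Real.sqrt_nonneg y),
          abs_of_nonneg (a := (1 - c) / 2 * φ ^ 2) (mul_nonneg (by linarith) (sq_nonneg φ))]
    _ ≤ √y * (besselEnergy c y / 2) + 1 / 2 * besselEnergy c y := by
        gcongr
        linarith
    _ = (√y + 1) / 2 * besselEnergy c y := by ring

-- By the virial identity, `φ²` carries half of the energy up to boundary terms.
theorem sub_mul_besselEnergy_sub_le_integral_sq (hc : 0 < c) (hc' : c ≤ 1 / 2) {A B : ℝ}
    (hA : 0 ≤ A) (hAB : A ≤ B) :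
    (B - A) * besselEnergy c A - (√B + 1) * besselEnergy c B ≤
      2 * ∫ y in A..B, besselClifford c y ^ 2 := by
  have hφ : Continuous fun y => 2 * besselClifford c y ^ 2 :=
    ((continuous_besselClifford hc).pow 2).const_mul 2
  have hE := continuous_besselEnergy hc
  have hmono := monotone_besselEnergy hc hc'
  have hvirial := intervalIntegral.integral_eq_sub_of_hasDerivAt
    (fun y _ => hasDerivAt_besselVirial hc y) ((hφ.sub hE).intervalIntegrable A B)
  rw [intervalIntegral.integral_sub (hφ.intervalIntegrable A B) (hE.intervalIntegrable A B),
    intervalIntegral.integral_const_mul] at hvirial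
  have hE_int : (B - A) * besselEnergy c A ≤ ∫ y in A..B, besselEnergy c y := by
    rw [← smul_eq_mul, ← intervalIntegral.integral_const]
    exact intervalIntegral.integral_mono_on hAB intervalIntegrable_const
      (hE.intervalIntegrable A B) fun y hy => hmono hy.1
  have hWA := (abs_le.1 (abs_besselVirial_le hc hc' hA)).2
  have hWB := (abs_le.1 (abs_besselVirial_le hc hc' (hA.trans hAB))).1
  have hWAB : (√A + 1) / 2 * besselEnergy c A ≤ (√B + 1) / 2 * besselEnergy c B := by
    have := besselEnergy_nonneg (c := c) hA
    gcongr
    exact hmono hAB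
  linarith

theorem integral_sq_besselClifford_le (hc : 0 < c) (hc' : c ≤ 1 / 2) {A B : ℝ}
    (hA : 0 ≤ A) (hAB : A ≤ B) :
    ∫ y in A..B, besselClifford c y ^ 2 ≤
      √(besselEnergy c B) * ∫ y in A..B, |besselClifford c y| := by
  have hφ := continuous_besselClifford hc
  rw [← intervalIntegral.integral_const_mul]
  refine intervalIntegral.integral_mono_on hAB ((hφ.pow 2).intervalIntegrable A B)
    ((hφ.abs.const_mul _).intervalIntegrable A B) fun y hy => ?_
  have hφ_le : |besselClifford c y| ≤ √(besselEnergy c B) := by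
    refine Real.abs_le_sqrt ?_
    exact (sq_besselClifford_le_besselEnergy (hA.trans hy.1)).trans
      (monotone_besselEnergy hc hc' hy.2)
  rw [← sq_abs, sq]
  gcongr

theorem mul_sqrt_besselEnergy_le (hc : 0 < c) (hc' : c ≤ 1 / 2) {p q x : ℝ} (hp : 0 < p)
    (hpq : p ≤ q) (hx : 0 < x) :
    ((q - p) * (p / q) * x - √(q * x) - 1) * √(besselEnergy c (q * x)) ≤
      2 * x * ∫ z in p..q, |besselClifford c (z * x)| := by
  have hq := hp.trans_le hpq
  have hpx : 0 < p * x := by positivity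
  have hpqx : p * x ≤ q * x := by gcongr
  set s := √(besselEnergy c (q * x))
  have hs_sq : s ^ 2 = besselEnergy c (q * x) := Real.sq_sqrt (besselEnergy_nonneg (by positivity))
  have hs : 0 < s := Real.sqrt_pos.2 <| one_pos.trans_le <|
    besselEnergy_zero c ▸ monotone_besselEnergy hc hc' (by positivity)
  have hE : p / q * s ^ 2 ≤ besselEnergy c (p * x) := by
    have h := antitoneOn_besselEnergy_div hc hpx (hpx.trans_le hpqx) hpqx
    simp only [← hs_sq] at h
    field_simp at h ⊢
    linarith
  have hlower := sub_mul_besselEnergy_sub_le_integral_sq hc hc' hpx.le hpqx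
  have hupper := integral_sq_besselClifford_le hc hc' hpx.le hpqx
  rw [← intervalIntegral.mul_integral_comp_mul_right (f := fun y => |besselClifford c y|)] at hupper
  refine le_of_mul_le_mul_left ?_ hs
  calc s * (((q - p) * (p / q) * x - √(q * x) - 1) * s)
      = (q * x - p * x) * (p / q * s ^ 2) - (√(q * x) + 1) * s ^ 2 := by ring
    _ ≤ (q * x - p * x) * besselEnergy c (p * x) - (√(q * x) + 1) * besselEnergy c (q * x) := by
        rw [hs_sq] at hE ⊢
        gcongr
    _ ≤ s * (2 * x * ∫ z in p..q, |besselClifford c (z * x)|) := by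
        linarith

theorem exists_forall_sqrt_mul_add_one_le {q κ : ℝ} (hq : 0 ≤ q) (hκ : 0 < κ) :
    ∃ x₀ > 0, ∀ x ≥ x₀, √(q * x) + 1 ≤ κ * x := by
  refine ⟨4 * q / κ ^ 2 + 2 / κ, by positivity, fun x hx => ?_⟩
  have hx_pos : 0 < x := lt_of_lt_of_le (by positivity) hx
  have hx₁ : 4 * q / κ ^ 2 ≤ x := le_trans (le_add_of_nonneg_right (by positivity)) hx
  have hx₂ : 2 / κ ≤ x := le_trans (le_add_of_nonneg_left (by positivity)) hx
  have hsqrt : √(q * x) ≤ κ * x / 2 := by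
    refine Real.sqrt_le_iff.2 ⟨by positivity, ?_⟩
    calc q * x = κ ^ 2 / 4 * (4 * q / κ ^ 2) * x := by field_simp
      _ ≤ κ ^ 2 / 4 * x * x := by gcongr
      _ = (κ * x / 2) ^ 2 := by ring
  have hone : 1 ≤ κ * x / 2 := by
    rw [div_le_iff₀ hκ] at hx₂
    linarith
  linarith

theorem exists_sqrt_besselEnergy_le (hc : 0 < c) (hc' : c ≤ 1 / 2) {p q : ℝ} (hp : 0 < p)
    (hpq : p < q) :
    ∃ C, ∀ x, √(besselEnergy c (q * x)) ≤
      C * (1 + ∫ z in p..q, |besselClifford c (z * x)|) := by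
  have hq := hp.trans hpq
  obtain ⟨κ, hκ⟩ : ∃ κ, κ = (q - p) * (p / q) := ⟨_, rfl⟩
  have hκ_pos : 0 < κ := by rw [hκ]; have := sub_pos.2 hpq; positivity
  obtain ⟨x₀, hx₀, hlarge⟩ := exists_forall_sqrt_mul_add_one_le hq.le (half_pos hκ_pos)
  refine ⟨√(besselEnergy c (q * x₀)) + 4 / κ, fun x => ?_⟩
  set I := ∫ z in p..q, |besselClifford c (z * x)|
  set s := √(besselEnergy c (q * x))
  have hI : 0 ≤ I := intervalIntegral.integral_nonneg hpq.le fun z _ => abs_nonneg _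
  obtain hxx | hxx := le_total x x₀
  · calc s ≤ √(besselEnergy c (q * x₀)) :=
          Real.sqrt_le_sqrt (monotone_besselEnergy hc hc' (by gcongr))
      _ ≤ √(besselEnergy c (q * x₀)) + 4 / κ := le_add_of_nonneg_right (by positivity)
      _ ≤ (√(besselEnergy c (q * x₀)) + 4 / κ) * (1 + I) :=
          le_mul_of_one_le_right (by positivity) (by linarith)
  · have hx_pos : 0 < x := hx₀.trans_le hxx
    have hs : κ * x / 2 * s ≤ 2 * x * I := by
      refine le_trans ?_ (mul_sqrt_besselEnergy_le hc hc' hp hpq.le hx_pos)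
      rw [← hκ]
      gcongr
      linarith [hlarge x hxx]
    calc s = 2 / (κ * x) * (κ * x / 2 * s) := by field_simp
      _ ≤ 2 / (κ * x) * (2 * x * I) := by gcongr
      _ = 4 / κ * I := by field_simp; ring
      _ ≤ (√(besselEnergy c (q * x₀)) + 4 / κ) * (1 + I) := by
          gcongr
          · exact le_add_of_nonneg_left (Real.sqrt_nonneg _)
          · linarith

end Energy

section Baire

variable {Ω Z E : Type*} [MeasurableSpace Ω] {μ : Measure Ω} [TopologicalSpace Z]

theorem lowerSemicontinuous_lintegral [FirstCountableTopology Z] {F : Z → Ω → ℝ≥0∞}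
    (hF_meas : ∀ z, AEMeasurable (F z) μ) (hF : ∀ ω, LowerSemicontinuous fun z => F z ω) :
    LowerSemicontinuous fun z => ∫⁻ ω, F z ω ∂μ :=
  lowerSemicontinuous_iff_le_liminf.2 fun z =>
    (lintegral_mono fun ω => lowerSemicontinuous_iff_le_liminf.1 (hF ω) z).trans
      (lintegral_liminf_le' hF_meas)

theorem exists_isOpen_forall_le_natCast [BaireSpace Z] {F : Z → ℝ≥0∞}
    (hF : LowerSemicontinuous F) {U : Set Z} (hU : IsOpen U) (hU' : U.Nonempty)
    (hF_top : ∀ z ∈ U, F z ≠ ∞) :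
    ∃ V ⊆ U, IsOpen V ∧ V.Nonempty ∧ ∃ N : ℕ, ∀ z ∈ V, F z ≤ N := by
  have hclosed (N : ℕ) : IsClosed (F ⁻¹' Iic (N : ℝ≥0∞) ∪ Uᶜ) :=
    (hF.isClosed_preimage _).union hU.isClosed_compl
  have hcover : ⋃ N : ℕ, F ⁻¹' Iic (N : ℝ≥0∞) ∪ Uᶜ = univ := by
    refine eq_univ_of_forall fun z => mem_iUnion.2 ?_
    by_cases hz : z ∈ U
    · exact (ENNReal.exists_nat_gt (hF_top z hz)).imp fun N hN => .inl hN.le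
    · exact ⟨0, .inr hz⟩
  obtain ⟨z, hzU, hz⟩ :=
    (dense_iUnion_interior_of_closed hclosed hcover).inter_open_nonempty U hU hU'
  obtain ⟨N, hzN⟩ := mem_iUnion.1 hz
  exact ⟨U ∩ interior (F ⁻¹' Iic (N : ℝ≥0∞) ∪ Uᶜ), inter_subset_left, hU.inter isOpen_interior,
    ⟨z, hzU, hzN⟩, N, fun y hy => (interior_subset hy.2).resolve_right (not_not.2 hy.1)⟩

theorem exists_isOpen_forall_integral_norm_le [FirstCountableTopology Z] [BaireSpace Z]
    [NormedAddCommGroup E] {f : Z → Ω → E} (hf_meas : ∀ z, AEStronglyMeasurable (f z) μ)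
    (hf : ∀ ω, Continuous fun z => f z ω) {U : Set Z} (hU : IsOpen U) (hU' : U.Nonempty)
    (hf_int : ∀ z ∈ U, Integrable (f z) μ) :
    ∃ V ⊆ U, IsOpen V ∧ V.Nonempty ∧ ∃ N : ℝ, ∀ z ∈ V, ∫ ω, ‖f z ω‖ ∂μ ≤ N := by
  obtain ⟨V, hVU, hV, hV', N, hN⟩ := exists_isOpen_forall_le_natCast
    (lowerSemicontinuous_lintegral (μ := μ) (fun z => (hf_meas z).enorm)
      fun ω => (hf ω).enorm.lowerSemicontinuous) hU hU' fun z hz => (hf_int z hz).2.ne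
  refine ⟨V, hVU, hV, hV', N, fun z hz => ?_⟩
  rw [integral_norm_eq_lintegral_enorm (hf_meas z)]
  exact ENNReal.toReal_le_of_le_ofReal N.cast_nonneg (by simpa using hN z hz)

end Baire

section Transform

variable {Ω : Type*} [MeasurableSpace Ω] {μ : Measure Ω} {X : Ω → ℝ} {a b p q : ℝ}

theorem exists_isOpen_integrable_besselClifford (hb : 0 < b)
    (h : ∀ y ≥ 0, besselClifford b y = ∫ ω, besselClifford a (y * X ω) ∂μ) :
    ∃ U ⊆ Ioi (0 : ℝ), IsOpen U ∧ U.Nonempty ∧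
      ∀ y ∈ U, Integrable (fun ω => besselClifford a (y * X ω)) μ := by
  have hJ := continuous_besselClifford hb
  refine ⟨Ioi 0 ∩ {y | besselClifford b y ≠ 0}, inter_subset_left,
    isOpen_Ioi.inter (isOpen_ne_fun hJ continuous_const), ?_, fun y hy => ?_⟩
  · have hne : ∀ᶠ y in 𝓝[>] 0, besselClifford b y ≠ 0 :=
      nhdsWithin_le_nhds (hJ.continuousAt.eventually_ne (by simp [besselClifford_zero]))
    obtain ⟨y, hy, hy₀⟩ := (hne.and self_mem_nhdsWithin).exists
    exact ⟨y, hy₀, hy⟩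
  -- A non-integrable function has integral `0`, so a nonzero value forces integrability.
  · by_contra hnot
    exact hy.2 (by rw [h y (le_of_lt hy.1), integral_undef hnot])

theorem integrable_gamma_mul [SFinite μ] {f : ℝ → Ω → ℝ} (hp : 0 < p)
    (hf_meas : AEStronglyMeasurable (Function.uncurry f) ((volume.restrict (Ioi 0)).prod μ))
    {g : Ω → ℝ} (hg : Integrable g μ) {r : ℝ}
    (hfg : ∀ᵐ ω ∂μ, ∀ t ≥ 0, |f t ω| ≤ (1 + r * t) * g ω) :
    Integrable (Function.uncurry fun t ω => Real.exp (-t) * t ^ (p - 1) * f t ω)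
      ((volume.restrict (Ioi 0)).prod μ) := by
  have hweight : IntegrableOn (fun t => Real.exp (-t) * t ^ (p - 1) * (1 + r * t)) (Ioi 0) := by
    refine IntegrableOn.congr_fun ((Real.GammaIntegral_convergent hp).add
      ((Real.GammaIntegral_convergent (add_pos hp one_pos)).const_mul r))
      (fun t (ht : 0 < t) => ?_) measurableSet_Ioi
    simp only [Pi.add_apply, add_sub_cancel_right, Real.rpow_sub_one ht.ne']
    field_simp
  refine (hweight.mul_prod hg).mono' ?_ ?_
  · exact (by fun_prop : Measurable fun z : ℝ × Ω => Real.exp (-z.1) * z.1 ^ (p - 1))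
      |>.aestronglyMeasurable.mul hf_meas
  · filter_upwards [Measure.quasiMeasurePreserving_snd.ae hfg,
      Measure.quasiMeasurePreserving_fst.ae (ae_restrict_mem measurableSet_Ioi)]
      with ⟨t, ω⟩ hω (ht : 0 < t)
    simp only [Function.uncurry_apply_pair, Real.norm_eq_abs]
    rw [abs_mul, abs_of_pos (by positivity), mul_assoc _ (1 + r * t)]
    exact mul_le_mul_of_nonneg_left (hω t ht.le) (by positivity)

theorem integrable_intervalIntegral [SFinite μ] {G : Type*} [NormedAddCommGroup G]
    [NormedSpace ℝ G] {f : ℝ → Ω → G} (hpq : p ≤ q)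
    (hf_meas : AEStronglyMeasurable (Function.uncurry f) ((volume.restrict (Ioc p q)).prod μ))
    (hf : ∀ z ∈ Icc p q, Integrable (f z) μ) {N : ℝ} (hN : ∀ z ∈ Icc p q, ∫ ω, ‖f z ω‖ ∂μ ≤ N) :
    Integrable (fun ω => ∫ z in p..q, f z ω) μ := by
  simp only [intervalIntegral.integral_of_le hpq]
  refine Integrable.integral_prod_right (f := Function.uncurry f) <|
    (integrable_prod_iff hf_meas).2 ⟨?_, .of_bound hf_meas.norm.integral_prod_right' N ?_⟩
  all_goals filter_upwards [ae_restrict_mem measurableSet_Ioc] with z hz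
  · exact hf z (Ioc_subset_Icc_self hz)
  · rw [Real.norm_of_nonneg (integral_nonneg fun ω => norm_nonneg _)]
    exact hN z (Ioc_subset_Icc_self hz)

variable [IsFiniteMeasure μ]

theorem integrable_sqrt_besselEnergy (ha : 0 < a) (ha' : a ≤ 1 / 2) (hX : AEMeasurable X μ)
    {U : Set ℝ} (hU : IsOpen U) (hU' : U.Nonempty) (hU₀ : U ⊆ Ioi 0)
    (h_int : ∀ y ∈ U, Integrable (fun ω => besselClifford a (y * X ω)) μ) :
    ∃ q > 0, Integrable (fun ω => √(besselEnergy a (q * X ω))) μ := by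
  have hJ := continuous_besselClifford ha
  obtain ⟨V, hVU, hV, ⟨z, hz⟩, N, hN⟩ := exists_isOpen_forall_integral_norm_le (μ := μ)
    (f := fun y ω => besselClifford a (y * X ω))
    (fun y => (hJ.measurable.comp_aemeasurable (hX.const_mul y)).aestronglyMeasurable)
    (fun ω => by fun_prop) hU hU' h_int
  obtain ⟨ε, hε, hεV⟩ := Metric.nhds_basis_closedBall.mem_iff.1 (hV.mem_nhds hz)
  rw [Real.closedBall_eq_Icc] at hεV
  have hle : z - ε ≤ z + ε := by linarith
  have hpos : 0 < z - ε := hU₀ (hVU (hεV (left_mem_Icc.2 hle)))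
  have hq : 0 < z + ε := hpos.trans_le hle
  have h_abs : Integrable (fun ω => ∫ y in (z - ε)..(z + ε), |besselClifford a (y * X ω)|) μ := by
    refine integrable_intervalIntegral (N := N) hle ?_
      (fun y hy => (h_int y (hVU (hεV hy))).abs) fun y hy => by simpa using hN y (hεV hy)
    exact (hJ.abs.measurable.comp_aemeasurable
      (measurable_fst.aemeasurable.mul hX.comp_snd)).aestronglyMeasurable
  obtain ⟨C, hC⟩ := exists_sqrt_besselEnergy_le ha ha' hpos (by linarith : z - ε < z + ε)
  refine ⟨z + ε, hq, .mono' (((integrable_const 1).add h_abs).const_mul C) ?_ ?_⟩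
  · exact ((continuous_besselEnergy ha).sqrt.measurable.comp_aemeasurable
      (hX.const_mul _)).aestronglyMeasurable
  · refine ae_of_all _ fun ω => ?_
    rw [Real.norm_of_nonneg (Real.sqrt_nonneg _)]
    exact hC _

theorem exists_integrable_bound_besselClifford (ha : 0 < a) (hX : AEMeasurable X μ)
    (hX₀ : 0 ≤ᵐ[μ] X) {U : Set ℝ} (hU : IsOpen U) (hU' : U.Nonempty) (hU₀ : U ⊆ Ioi 0)
    (h_int : ∀ y ∈ U, Integrable (fun ω => besselClifford a (y * X ω)) μ) :
    ∃ g : Ω → ℝ, Integrable g μ ∧ ∃ r : ℝ,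
      ∀ᵐ ω ∂μ, ∀ t ≥ 0, |besselClifford a (t * X ω)| ≤ (1 + r * t) * g ω := by
  obtain ha' | ha' := le_total (1 / 2) a
  · refine ⟨fun _ => 1, integrable_const 1, 0, ?_⟩
    filter_upwards [hX₀] with ω hω t ht
    simpa using abs_besselClifford_le_one ha' (mul_nonneg ht hω)
  · obtain ⟨q, hq, hq_int⟩ := integrable_sqrt_besselEnergy ha ha' hX hU hU' hU₀ h_int
    refine ⟨_, hq_int, q⁻¹, ?_⟩
    filter_upwards [hX₀] with ω hω t ht
    have htq : 0 ≤ q⁻¹ * t := by positivity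
    have hqX : 0 ≤ q * X ω := mul_nonneg hq.le hω
    have hscale : t * X ω = q⁻¹ * t * (q * X ω) := by field_simp
    calc |besselClifford a (t * X ω)| ≤ √(besselEnergy a (t * X ω)) :=
          Real.abs_le_sqrt (sq_besselClifford_le_besselEnergy (mul_nonneg ht hω))
      _ ≤ √((1 + q⁻¹ * t) * besselEnergy a (q * X ω)) := by
          rw [hscale]
          exact Real.sqrt_le_sqrt (besselEnergy_mul_le ha ha' htq hqX)
      _ = √(1 + q⁻¹ * t) * √(besselEnergy a (q * X ω)) := Real.sqrt_mul (by positivity) _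
      _ ≤ (1 + q⁻¹ * t) * √(besselEnergy a (q * X ω)) := by
          gcongr
          exact Real.sqrt_le_iff.2 ⟨by positivity, by nlinarith⟩

theorem kummer_neg_eq_integral (ha : 0 < a) (hb : 0 < b) (hp : 0 < p) (hX : AEMeasurable X μ)
    (hX₀ : 0 ≤ᵐ[μ] X)
    (h : ∀ y ≥ 0, besselClifford b y = ∫ ω, besselClifford a (y * X ω) ∂μ) {u : ℝ} (hu : 0 ≤ u) :
    kummer p b (-u) = ∫ ω, kummer p a (-(u * X ω)) ∂μ := by
  obtain ⟨U, hU₀, hU, hU', h_int⟩ := exists_isOpen_integrable_besselClifford hb h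
  obtain ⟨g, hg, r, hgr⟩ := exists_integrable_bound_besselClifford ha hX hX₀ hU hU' hU₀ h_int
  set γ : ℝ → ℝ := fun t => Real.exp (-t) * t ^ (p - 1)
  have hfubini : Integrable (Function.uncurry fun t ω => γ t * besselClifford a (u * t * X ω))
      ((volume.restrict (Ioi 0)).prod μ) := by
    refine integrable_gamma_mul hp ?_ hg (r := r * u) ?_
    · exact ((continuous_besselClifford ha).measurable.comp_aemeasurable
        ((measurable_fst.const_mul u).aemeasurable.mul hX.comp_snd)).aestronglyMeasurable
    · filter_upwards [hgr] with ω hω t ht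
      simpa only [mul_assoc] using hω (u * t) (mul_nonneg hu ht)
  have hswap : ∫ t in Ioi 0, γ t * besselClifford b (u * t) =
      ∫ ω, (∫ t in Ioi 0, γ t * besselClifford a (u * X ω * t)) ∂μ := by
    calc (∫ t in Ioi 0, γ t * besselClifford b (u * t))
        = ∫ t in Ioi 0, (∫ ω, γ t * besselClifford a (u * t * X ω) ∂μ) :=
          setIntegral_congr_fun measurableSet_Ioi fun t (ht : 0 < t) => by
            simp only [h _ (mul_nonneg hu ht.le), integral_const_mul]
      _ = ∫ ω, (∫ t in Ioi 0, γ t * besselClifford a (u * t * X ω)) ∂μ :=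
          integral_integral_swap hfubini
      _ = _ := by simp only [mul_right_comm u]
  simp only [γ, integral_gamma_mul_besselClifford hp ha,
    integral_gamma_mul_besselClifford hp hb, integral_const_mul] at hswap
  exact mul_left_cancel₀ (Real.Gamma_pos_of_pos hp).ne' hswap

end Transform

section Mgf

variable {Ω : Type*} [MeasurableSpace Ω] {μ : Measure Ω} {X : Ω → ℝ} {a b : ℝ}

theorem Iio_subset_interior_integrableExpSet [IsFiniteMeasure μ] (hX : AEMeasurable X μ)
    (hX₀ : 0 ≤ᵐ[μ] X) : Iio 0 ⊆ interior (integrableExpSet X μ) := by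
  refine isOpen_Iio.subset_interior_iff.2 fun t (ht : t < 0) => ?_
  refine .of_bound (hX.const_mul t).exp.aestronglyMeasurable 1 ?_
  filter_upwards [hX₀] with ω hω
  simpa using mul_nonpos_of_nonpos_of_nonneg ht.le hω

theorem sq_deriv_mgf_le {t : ℝ} (ht : t ∈ interior (integrableExpSet X μ)) :
    deriv (mgf X μ) t ^ 2 ≤ iteratedDeriv 2 (mgf X μ) t * mgf X μ t := by
  obtain rfl | hμ := eq_or_ne μ 0
  · simp [mgf_zero_measure]
  have hpos : 0 < mgf X μ t := mgf_pos' hμ (interior_subset (s := integrableExpSet X μ) ht)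
  have hvar : 0 ≤ iteratedDeriv 2 (cgf X μ) t := by
    rw [iteratedDeriv_two_cgf_eq_integral ht]
    exact div_nonneg (integral_nonneg fun ω => by positivity) hpos.le
  rw [iteratedDeriv_two_cgf ht, deriv_cgf ht, ← deriv_mgf ht, ← iteratedDeriv_mgf ht 2, div_pow,
    sub_nonneg, div_le_div_iff₀ (by positivity) hpos] at hvar
  refine le_of_mul_le_mul_right (hvar.trans_eq ?_) hpos
  ring

theorem le_of_mgf_eq_kummer [IsFiniteMeasure μ] (ha : 0 < a) (hb : 0 < b) (hX : AEMeasurable X μ)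
    (hX₀ : 0 ≤ᵐ[μ] X) (h : ∀ t < 0, mgf X μ t = kummer a b t) : a ≤ b := by
  have hlogconvex : ∀ t < 0,
      deriv (kummer a b) t ^ 2 ≤ iteratedDeriv 2 (kummer a b) t * kummer a b t := by
    intro t ht
    have heq : mgf X μ =ᶠ[𝓝 t] kummer a b := eventually_of_mem (Iio_mem_nhds ht) h
    rw [← heq.deriv_eq, ← heq.iteratedDeriv_eq 2, ← h t ht]
    exact sq_deriv_mgf_le (Iio_subset_interior_integrableExpSet hX hX₀ ht)
  have hK₀ := continuous_kummer ha hb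
  have hK₁ := continuous_kummer (add_pos ha one_pos) (add_pos hb one_pos)
  have hK₂ := continuous_kummer (add_pos (add_pos ha one_pos) one_pos)
    (add_pos (add_pos hb one_pos) one_pos)
  rw [deriv_kummer ha hb, iteratedDeriv_two_kummer ha hb] at hlogconvex
  have hlimit : (0 : ℝ) ∈ closure (Iio 0) := by simp
  have hle := le_on_closure (s := Iio 0) hlogconvex (by fun_prop) (by fun_prop) hlimit
  simp only [kummer_zero, mul_one] at hle
  field_simp at hle
  linarith

theorem le_of_besselClifford_eq_integral [IsFiniteMeasure μ] (ha : 0 < a) (hb : 0 < b)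
    (hX : AEMeasurable X μ) (hX₀ : 0 ≤ᵐ[μ] X)
    (h : ∀ y ≥ 0, besselClifford b y = ∫ ω, besselClifford a (y * X ω) ∂μ) : a ≤ b := by
  refine le_of_mgf_eq_kummer ha hb hX hX₀ fun t ht => ?_
  have hkummer := kummer_neg_eq_integral ha hb ha hX hX₀ h (neg_nonneg.2 ht.le)
  simpa [kummer_self ha, mgf] using hkummer.symm

end Mgf

end Development

/-- For `α > -1`, `β < 0` with `α + β > -1`, there is no finite positive Borel measure `μ`
on `[0,∞)` with `j_{α+β}(z) = ∫₀^∞ j_α(zx) dμ(x)` for all real `z`. -/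
theorem stmt_3 (α β : ℝ) (hα : α > -1) (hβ : β < 0) (hαβ : α + β > -1) :
    ¬ ∃ μ : Measure ℝ, IsFiniteMeasure μ ∧ μ (Set.Iio 0) = 0 ∧
      ∀ z : ℝ, jBessel ((α + β : ℝ) : ℂ) (z : ℂ) = ∫ x, jBessel (α : ℂ) ((z * x : ℝ) : ℂ) ∂μ := by
  rintro ⟨μ, hμ, -, h⟩
  have hle : α + 1 ≤ α + β + 1 := by
    refine le_of_besselClifford_eq_integral (μ := μ) (X := fun x => x ^ 2) (by linarith)
      (by linarith) (by fun_prop) (ae_of_all _ fun x => sq_nonneg x) fun y hy => ?_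
    have hz : (2 * √y) ^ 2 / 4 = y := by rw [mul_pow, Real.sq_sqrt hy]; ring
    have hzx (x : ℝ) : (2 * √y * x) ^ 2 / 4 = y * x ^ 2 := by rw [mul_pow, mul_div_right_comm, hz]
    have hy' := h (2 * √y)
    simp only [jBessel_ofReal hα, jBessel_ofReal hαβ, hz, hzx, integral_complex_ofReal] at hy'
    exact Complex.ofReal_injective hy'
  linarith
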